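/- If the function V(m) belongs to the class 𝒱, then the function m ↦ V(m) + m² belongs to the class 𝒱∞. -/

import Mathlib

open MeasureTheory Filter

noncomputable section

/-- The Cauchy–Stieltjes kernel density `f(x,m) = V(m)/(V(m)+m(m-x))`. -/
def cskKernel (V : ℝ → ℝ) (m x : ℝ) : ℝ := V m / (V m + m * (m - x))

/-- `ν` is a non-degenerate, compactly supported probability measure on `ℝ` with mean `0`. -/
def IsCSKGenerator (ν : Measure ℝ) : Prop :=
  IsProbabilityMeasure ν ∧
  (∃ R : ℝ, ν (Set.Icc (-R) R)ᶜ = 0) ∧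
  (∀ a : ℝ, ν ≠ Measure.dirac a) ∧
  (∫ x, x ∂ν) = 0

/-- `V` is the variance function of the CSK family generated by `ν`:
`V` is real-analytic near `0`, `V 0 > 0`, and for all `m` near `0` the kernel
`f(x,m)` is a.e. nonnegative, integrates to `1`, and has mean `m`. -/
def IsCSKVarianceFun (ν : Measure ℝ) (V : ℝ → ℝ) : Prop :=
  AnalyticAt ℝ V 0 ∧ 0 < V 0 ∧
  ∃ ε > 0, ∀ m : ℝ, |m| < ε →
    (∀ᵐ x ∂ν, 0 ≤ cskKernel V m x) ∧
    (∫ x, cskKernel V m x ∂ν) = 1 ∧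
    (∫ x, x * cskKernel V m x ∂ν) = m

/-- The class `𝒱` of variance functions of CSK families generated by
non-degenerate compactly supported probability measures with mean `0` and variance `1`. -/
def memV (V : ℝ → ℝ) : Prop :=
  ∃ ν : Measure ℝ, IsCSKGenerator ν ∧ (∫ x, x ^ 2 ∂ν) = 1 ∧ IsCSKVarianceFun ν V

/-- The class `𝒱∞`: those `V` such that `m ↦ V (c * m)` is in `𝒱` for every real `c`. -/
def memVinf (V : ℝ → ℝ) : Prop := ∀ c : ℝ, memV (fun m => V (c * m))

/-!
Let `ν` generate `V`, let `ξ₀, ξ₁, …` be independent with law `ν`, and on the `L²` space of their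
joint law let `S` be the isometry induced by the shift, `X` the multiplication by `ξ₀` and `Ω = 1`.
Since `ν` is centred, `S* X S = 0`, and `A = X S + S* X + c (1 - S S*) X (1 - S S*)` is a sum of
creation, annihilation and preservation operators of a full Fock space. Its distribution `μ` in the
vacuum state `Ω` has bounded support, mean `⟪X Ω, Ω⟫ = 0` and the same variance `‖X Ω‖²` as `ν`.

Put `M = c m`, `W(m) = V(M) + M²` and `r = W(m) / m`. That `μ` generates `W` means that its Cauchy
transform takes the value `1 / r` at `r + m`. The vector `ψ` with `(r + m - A) ψ = Ω` is found in
the form `(1 - N)⁻¹ (r⁻¹ Ω)` with `N = g(ξ₀) S`, which reduces the equation to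
`(r - c x) g(x) = x - M`, `∫ g dν = 0` and `∫ x g(x) dν = m`. The first condition makes `g` the
multiple `m / V(M)` of `x - M` times the Cauchy–Stieltjes kernel of `ν` at `M`; the other two then
say that this kernel has mass `1`, mean `M` and variance `V(M)`.
-/

open ProbabilityTheory
open scoped CompactlySupported ENNReal InnerProductSpace Topology

section SpectralMeasure

variable {A : Type*} [CStarAlgebra A] [PartialOrder A] [StarOrderedRing A]

theorem exists_measure_forall_integral_eq_cfc (φ : A →ₚ[ℝ] ℝ) {a : A} (ha : IsSelfAdjoint a) :
    ∃ μ : Measure ℝ, IsFiniteMeasure μ ∧ (∀ᵐ x ∂μ, x ∈ spectrum ℝ a) ∧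
      ∀ f : ℝ → ℝ, ContinuousOn f (spectrum ℝ a) → ∫ x, f x ∂μ = φ (cfc f a) := by
  have hs : IsCompact (spectrum ℝ a) := ContinuousFunctionalCalculus.isCompact_spectrum a
  have : CompactSpace (spectrum ℝ a) := isCompact_iff_compactSpace.mp hs
  have hemb : MeasurableEmbedding (Subtype.val : spectrum ℝ a → ℝ) :=
    .subtype_coe hs.measurableSet
  let Λ : C_c(spectrum ℝ a, ℝ) →ₚ[ℝ] ℝ :=
    { toFun g := φ (cfcHom (R := ℝ) ha g)
      map_add' g h := by rw [← map_add φ, ← map_add (cfcHom ha)]; rfl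
      map_smul' t g := by
        rw [RingHom.id_apply, ← map_smul φ, ← map_smul (cfcHom ha)]; rfl
      monotone' g h hgh := OrderHomClass.mono φ (cfcHom_mono ha hgh) }
  refine ⟨(RealRMK.rieszMeasure Λ).map Subtype.val, inferInstance, ?_, fun f hf ↦ ?_⟩
  · exact hemb.ae_map_iff.mpr (.of_forall Subtype.property)
  · rw [hemb.integral_map, cfc_apply f a ha hf]
    exact RealRMK.integral_rieszMeasure Λ ⟨⟨_, hf.domRestrict⟩, .of_compactSpace _⟩

variable {H : Type*} [NormedAddCommGroup H] [InnerProductSpace ℂ H] [CompleteSpace H]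

/-- The vector state `T ↦ re ⟪T v, v⟫` of `v`, as a positive functional. It is real-valued because
the Riesz–Markov theorem is applied to the real functional calculus of a self-adjoint operator. -/
def vectorFunctional (v : H) : (H →L[ℂ] H) →ₚ[ℝ] ℝ :=
  .mk₀
    { toFun T := (⟪T v, v⟫_ℂ).re
      map_add' S T := by simp
      map_smul' t T := by simp [← Complex.coe_smul, mul_comm] }
    fun T hT ↦ ((ContinuousLinearMap.nonneg_iff_isPositive T).mp hT).re_inner_nonneg_left v

@[simp]
theorem vectorFunctional_apply (v : H) (T : H →L[ℂ] H) :
    vectorFunctional v T = (⟪T v, v⟫_ℂ).re := rfl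

theorem continuousOn_inv_const_sub {w : ℝ} {s : Set ℝ} (hw : w ∉ s) :
    ContinuousOn (fun x ↦ (w - x)⁻¹) s :=
  .inv₀ (by fun_prop) fun _ hx ↦ sub_ne_zero.mpr (ne_of_mem_of_not_mem hx hw).symm

theorem cfc_inv_const_sub_apply {T : H →L[ℂ] H} (hT : IsSelfAdjoint T) {w : ℝ}
    (hw : w ∉ spectrum ℝ T) {v ψ : H} (hψ : (w : ℂ) • ψ - T ψ = v) :
    cfc (fun x ↦ (w - x)⁻¹) T v = ψ := by
  have hsub : cfc (fun x ↦ w - x) T = algebraMap ℝ _ w - T := by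
    rw [cfc_sub (fun _ ↦ w) (fun x ↦ x) T, cfc_const _ T, cfc_id' ℝ T]
  have hinv : cfc (fun x ↦ (w - x)⁻¹) T * (algebraMap ℝ _ w - T) = 1 := by
    rw [← hsub, ← cfc_mul (fun x ↦ (w - x)⁻¹) (fun x ↦ w - x) T (continuousOn_inv_const_sub hw),
      ← cfc_const_one ℝ T]
    exact cfc_congr fun x hx ↦
      inv_mul_cancel₀ (sub_ne_zero.mpr (ne_of_mem_of_not_mem hx hw).symm)
  calc cfc (fun x ↦ (w - x)⁻¹) T v
      = (cfc (fun x ↦ (w - x)⁻¹) T * (algebraMap ℝ _ w - T)) ψ := by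
        simp [← hψ, Algebra.algebraMap_eq_smul_one]
    _ = ψ := by rw [hinv]; rfl

theorem exists_spectral_measure {T : H →L[ℂ] H} (hT : IsSelfAdjoint T) {v : H} (hv : ‖v‖ = 1) :
    ∃ μ : Measure ℝ, IsProbabilityMeasure μ ∧ (∀ᵐ x ∂μ, |x| ≤ ‖T‖) ∧
      ∫ x, x ∂μ = (⟪T v, v⟫_ℂ).re ∧ ∫ x, x ^ 2 ∂μ = ‖T v‖ ^ 2 ∧
      ∀ (w : ℝ) (ψ : H), ‖T‖ < |w| → (w : ℂ) • ψ - T ψ = v →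
        ∫ x, (w - x)⁻¹ ∂μ = (⟪ψ, v⟫_ℂ).re := by
  have : Nontrivial H := ⟨v, 0, norm_ne_zero_iff.mp (hv ▸ one_ne_zero)⟩
  have hnorm : ∀ x ∈ spectrum ℝ T, |x| ≤ ‖T‖ := fun x hx ↦ spectrum.norm_le_norm_of_mem hx
  obtain ⟨μ, _, hsupp, hint⟩ := exists_measure_forall_integral_eq_cfc (vectorFunctional v) hT
  refine ⟨μ, ?_, hsupp.mono hnorm, ?_, ?_, fun w ψ hw hψ ↦ ?_⟩
  · rw [isProbabilityMeasure_iff_real]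
    simpa [cfc_const_one ℝ T, hv] using hint (fun _ ↦ 1) continuousOn_const
  · rw [hint _ (by fun_prop), cfc_id' ℝ T, vectorFunctional_apply]
  · rw [hint _ (by fun_prop), cfc_pow_id T 2, pow_two, vectorFunctional_apply]
    exact (congrArg Complex.re (hT.isSymmetric (T v) v)).trans <| by
      simp [inner_self_eq_norm_sq_to_K, ← Complex.ofReal_pow]
  · have hw' : w ∉ spectrum ℝ T := fun h ↦ (hnorm w h).not_gt hw
    rw [hint _ (continuousOn_inv_const_sub hw'), vectorFunctional_apply,
      cfc_inv_const_sub_apply hT hw' hψ]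

end SpectralMeasure

section FreeOperator

/-- The sum of a creation operator `X * S`, its adjoint `star S * X` and `c` times a preservation
operator, in an abstract full Fock space: `S` is the isometry that inserts an empty first slot and
`X` acts on the first slot, so that `1 - S * star S` projects onto the vectors whose first slot is
orthogonal to the vacuum. -/
def freeOperator {A : Type*} [Ring A] [StarRing A] [Module ℂ A] (S X : A) (c : ℝ) : A :=
  X * S + star S * X + (c : ℂ) • ((1 - S * star S) * X * (1 - S * star S))

theorem isSelfAdjoint_freeOperator {A : Type*} [Ring A] [StarRing A] [Module ℂ A] [StarModule ℂ A]
    (S : A) {X : A} (hX : IsSelfAdjoint X) (c : ℝ) : IsSelfAdjoint (freeOperator S X c) := by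
  have hP : IsSelfAdjoint (1 - S * star S) := .sub (.one A) (.mul_star_self S)
  have hXS : star (X * S) = star S * X := by rw [star_mul, hX.star_eq]
  refine .add (hXS ▸ .add_star_self (X * S)) (.smul (Complex.conj_ofReal c) ?_)
  simpa [hP.star_eq] using hX.conjugate (1 - S * star S)

variable {H : Type*} [NormedAddCommGroup H] [InnerProductSpace ℂ H] [CompleteSpace H]
  {S X N : H →L[ℂ] H} {Ω ψ : H}

theorem star_apply_eq_self (hS : star S * S = 1) (hΩ : S Ω = Ω) : star S Ω = Ω := by
  nth_rw 1 [← hΩ]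
  exact DFunLike.congr_fun hS Ω

theorem inner_apply_eq_zero_of_star_mul_eq_zero (hN : star S * N = 0) (hΩ : S Ω = Ω) (v : H) :
    ⟪N v, Ω⟫_ℂ = 0 := by
  have hNv : star S (N v) = 0 := DFunLike.congr_fun hN v
  rw [← hΩ, ← ContinuousLinearMap.adjoint_inner_left, ← ContinuousLinearMap.star_eq_adjoint, hNv,
    inner_zero_left]

theorem freeOperator_apply_vacuum (hS : star S * S = 1) (hSX : star S * (X * S) = 0)
    (hΩ : S Ω = Ω) (c : ℝ) : freeOperator S X c Ω = X Ω := by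
  have hSXΩ : star S (X Ω) = 0 := by simpa [hΩ] using DFunLike.congr_fun hSX Ω
  simp [freeOperator, hΩ, hSXΩ, star_apply_eq_self hS hΩ]

theorem smul_sub_freeOperator_apply_eq {c : ℝ} {r m : ℂ} (hS : star S * S = 1)
    (hSX : star S * (X * S) = 0) (hΩ : S Ω = Ω) (hSN : star S * N = 0)
    (hSXN : star S * (X * N) = m • 1)
    (hrN : (r • 1 - (c : ℂ) • X) * N = (X - (c * m) • 1) * S) (hr : r ≠ 0)
    (hψ : ψ - N ψ = r⁻¹ • Ω) : (r + m) • ψ - freeOperator S X c ψ = Ω := by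
  have hψN : ψ = N ψ + r⁻¹ • Ω := by rw [← hψ, add_sub_cancel]
  have hSNψ : star S (N ψ) = 0 := DFunLike.congr_fun hSN ψ
  have hSXNψ : star S (X (N ψ)) = m • ψ := DFunLike.congr_fun hSXN ψ
  have hSXΩ : star S (X Ω) = 0 := by simpa [hΩ] using DFunLike.congr_fun hSX Ω
  have hSψ : star S ψ = r⁻¹ • Ω := by
    rw [hψN, map_add, hSNψ, zero_add, map_smul, star_apply_eq_self hS hΩ]
  have hPψ : ψ - S (star S ψ) = N ψ := by rw [hSψ, map_smul, hΩ, ← hψ, sub_sub_cancel]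
  have hSXψ : star S (X ψ) = m • ψ := by
    rw [← hSXNψ, ← sub_eq_zero, ← map_sub, ← map_sub, hψ, map_smul, map_smul, hSXΩ, smul_zero]
  have hrNψ : r • N ψ - (c : ℂ) • X (N ψ) = X (S ψ) - (c * m) • S ψ := DFunLike.congr_fun hrN ψ
  calc (r + m) • ψ - freeOperator S X c ψ
      = (r + m) • ψ - (X (S ψ) + m • ψ + (c : ℂ) • (X (N ψ) - m • S ψ)) := by
        simp [freeOperator, hPψ, hSXψ, hSXNψ]
    _ = r • ψ - (X (S ψ) - (c * m) • S ψ + (c : ℂ) • X (N ψ)) := by module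
    _ = r • (ψ - N ψ) := by rw [← hrNψ, sub_add_cancel, smul_sub]
    _ = Ω := by rw [hψ, smul_inv_smul₀ hr]

theorem exists_sub_apply_eq {𝕜 E : Type*} [NontriviallyNormedField 𝕜] [NormedAddCommGroup E]
    [NormedSpace 𝕜 E] [CompleteSpace E] {N : E →L[𝕜] E} (hN : ‖N‖ < 1) (v : E) :
    ∃ ψ, ψ - N ψ = v :=
  ⟨(↑(Units.oneSub N hN)⁻¹ : E →L[𝕜] E) v,
    DFunLike.congr_fun (Units.oneSub N hN).mul_inv v⟩

end FreeOperator

section L2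

variable {α : Type*} [MeasurableSpace α] {P : Measure α} {f g : α → ℝ}

/-- Multiplication by a real essentially bounded function, as a bounded operator on complex `L²`. It
supplies the operator `X` of `freeOperator`; complex scalars make `C⋆`-algebra results available. -/
def mulL2 (f : α → ℝ) (hf : MemLp f ∞ P) : Lp ℂ 2 P →L[ℂ] Lp ℂ 2 P :=
  (ContinuousLinearMap.lsmul ℂ ℂ).holderL P ∞ 2 2 (hf.ofReal.toLp fun x ↦ (f x : ℂ))

theorem coeFn_mulL2 (hf : MemLp f ∞ P) (u : Lp ℂ 2 P) :
    mulL2 f hf u =ᵐ[P] fun x ↦ (f x : ℂ) * u x := by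
  filter_upwards [ContinuousLinearMap.coeFn_holder (r := 2) (ContinuousLinearMap.lsmul ℂ ℂ)
    (hf.ofReal.toLp fun x ↦ (f x : ℂ)) u, (hf.ofReal (K := ℂ)).coeFn_toLp] with x hx hfx
  exact hx.trans (congrArg (· * u x) hfx)

theorem isSelfAdjoint_mulL2 (hf : MemLp f ∞ P) : IsSelfAdjoint (mulL2 f hf) := by
  rw [ContinuousLinearMap.isSelfAdjoint_iff_isSymmetric]
  intro u v
  rw [ContinuousLinearMap.coe_coe, L2.inner_def, L2.inner_def]
  refine integral_congr_ae ?_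
  filter_upwards [coeFn_mulL2 hf u, coeFn_mulL2 hf v] with x hu hv
  rw [hu, hv, RCLike.inner_apply, RCLike.inner_apply, map_mul, Complex.conj_ofReal]
  ring

theorem mulL2_mul_mulL2 (hf : MemLp f ∞ P) (hg : MemLp g ∞ P) :
    mulL2 f hf * mulL2 g hg = mulL2 (f * g) (hg.mul hf) := by
  ext1 u
  refine Lp.ext ?_
  filter_upwards [coeFn_mulL2 hf (mulL2 g hg u), coeFn_mulL2 hg u, coeFn_mulL2 (hg.mul hf) u]
    with x hfx hgx hfgx
  rw [hfgx, mul_apply_eq_comp, hfx, hgx, Pi.mul_apply, Complex.ofReal_mul, mul_assoc]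

theorem norm_mulL2_le {C : ℝ} (hC : 0 ≤ C) (hf : MemLp f ∞ P) (hfC : ∀ᵐ x ∂P, |f x| ≤ C) :
    ‖mulL2 f hf‖ ≤ C := by
  refine ContinuousLinearMap.opNorm_le_bound _ hC fun u ↦ Lp.norm_le_mul_norm_of_ae_le_mul ?_
  filter_upwards [coeFn_mulL2 hf u, hfC] with x hx hfx
  rw [hx, norm_mul, Complex.norm_real]
  exact mul_le_mul_of_nonneg_right hfx (norm_nonneg _)

theorem mulL2_congr_ae (hf : MemLp f ∞ P) (hg : MemLp g ∞ P) (hfg : f =ᵐ[P] g) :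
    mulL2 f hf = mulL2 g hg := by
  ext1 u
  refine Lp.ext ?_
  filter_upwards [coeFn_mulL2 hf u, coeFn_mulL2 hg u, hfg] with x hfx hgx hx
  rw [hfx, hgx, hx]

theorem mulL2_sub (hf : MemLp f ∞ P) (hg : MemLp g ∞ P) :
    mulL2 (f - g) (hf.sub hg) = mulL2 f hf - mulL2 g hg := by
  ext1 u
  refine Lp.ext (EventuallyEq.trans ?_ (Lp.coeFn_sub (mulL2 f hf u) (mulL2 g hg u)).symm)
  filter_upwards [coeFn_mulL2 (hf.sub hg) u, coeFn_mulL2 hf u, coeFn_mulL2 hg u] with x h hfx hgx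
  rw [h, Pi.sub_apply, Pi.sub_apply, hfx, hgx, Complex.ofReal_sub, sub_mul]

theorem mulL2_const (a : ℝ) :
    mulL2 (fun _ ↦ a) (memLp_top_const a) = (a : ℂ) • (1 : Lp ℂ 2 P →L[ℂ] Lp ℂ 2 P) := by
  ext1 u
  refine Lp.ext (EventuallyEq.trans ?_ (Lp.coeFn_smul (a : ℂ) u).symm)
  filter_upwards [coeFn_mulL2 (memLp_top_const a) u] with x h
  rw [h, Pi.smul_apply, smul_eq_mul]

theorem smul_one_sub_smul_mulL2_mul_mulL2 {r c a : ℝ} (hf : MemLp f ∞ P) (hg : MemLp g ∞ P)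
    (hfg : ∀ᵐ x ∂P, (r - c * f x) * g x = f x - a) :
    ((r : ℂ) • 1 - (c : ℂ) • mulL2 f hf) * mulL2 g hg = mulL2 f hf - (a : ℂ) • 1 := by
  have hcf : (c : ℂ) • mulL2 f hf = mulL2 (fun _ ↦ c) (memLp_top_const c) * mulL2 f hf := by
    rw [mulL2_const, smul_one_mul]
  rw [hcf, mulL2_mul_mulL2, ← mulL2_const, ← mulL2_const, ← mulL2_sub, ← mulL2_sub,
    mulL2_mul_mulL2]
  exact mulL2_congr_ae _ _ hfg

/-- The Koopman operator `u ↦ u ∘ θ` of a measure preserving map on complex `L²`. It supplies the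
isometry `S` of `freeOperator`, with `θ` the shift. -/
def koopman {θ : α → α} (hθ : MeasurePreserving θ P P) : Lp ℂ 2 P →L[ℂ] Lp ℂ 2 P :=
  (Lp.compMeasurePreservingₗᵢ ℂ θ hθ).toContinuousLinearMap

variable {θ : α → α}

theorem coeFn_koopman (hθ : MeasurePreserving θ P P) (u : Lp ℂ 2 P) :
    koopman hθ u =ᵐ[P] fun x ↦ u (θ x) :=
  Lp.coeFn_compMeasurePreserving u hθ

theorem star_koopman_mul_koopman (hθ : MeasurePreserving θ P P) :
    star (koopman hθ) * koopman hθ = 1 := by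
  rw [koopman, ContinuousLinearMap.star_eq_adjoint]
  exact LinearIsometry.adjoint_comp_self _

theorem norm_koopman_le_one (hθ : MeasurePreserving θ P P) : ‖koopman hθ‖ ≤ 1 :=
  LinearIsometry.norm_toContinuousLinearMap_le _

theorem koopman_const [IsFiniteMeasure P] (hθ : MeasurePreserving θ P P) (z : ℂ) :
    koopman hθ (Lp.const 2 P z) = Lp.const 2 P z := by
  refine Lp.ext ?_
  filter_upwards [coeFn_koopman hθ (Lp.const 2 P z), Lp.coeFn_const 2 P z,
    hθ.quasiMeasurePreserving.ae (Lp.coeFn_const 2 P z)] with x hx hconst hconstθ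
  rw [hx, hconstθ, hconst, Function.const_apply, Function.const_apply]

theorem star_koopman_mul_mulL2_mul_koopman [IsProbabilityMeasure P] (hθ : MeasurePreserving θ P P)
    (hf : MemLp f ∞ P) (hfθ : f ⟂ᵢ[P] θ) :
    star (koopman hθ) * (mulL2 f hf * koopman hθ) = ((∫ x, f x ∂P : ℝ) : ℂ) • 1 := by
  ext1 u
  refine ext_inner_right ℂ fun v ↦ ?_
  have hfm : AEStronglyMeasurable (fun t : ℝ ↦ (t : ℂ)) (P.map f) := by fun_prop
  have huv : AEStronglyMeasurable (fun x ↦ ⟪u x, v x⟫_ℂ) (P.map θ) := by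
    rw [hθ.map_eq]
    exact (Lp.aestronglyMeasurable u).inner (Lp.aestronglyMeasurable v)
  calc ⟪(star (koopman hθ) * (mulL2 f hf * koopman hθ)) u, v⟫_ℂ
      = ⟪mulL2 f hf (koopman hθ u), koopman hθ v⟫_ℂ := by
        rw [ContinuousLinearMap.star_eq_adjoint, mul_apply_eq_comp, mul_apply_eq_comp,
          ContinuousLinearMap.adjoint_inner_left]
    _ = ∫ x, (f x : ℂ) • ⟪u (θ x), v (θ x)⟫_ℂ ∂P := by
        rw [L2.inner_def]
        refine integral_congr_ae ?_
        filter_upwards [coeFn_mulL2 hf (koopman hθ u), coeFn_koopman hθ u, coeFn_koopman hθ v]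
          with x hfu hu hv
        rw [hfu, hu, hv, RCLike.inner_apply, RCLike.inner_apply, map_mul, Complex.conj_ofReal,
          smul_eq_mul]
        ring
    _ = (∫ x, (f x : ℂ) ∂P) • ∫ x, ⟪u (θ x), v (θ x)⟫_ℂ ∂P :=
        hfθ.integral_fun_comp_smul_comp hf.1.aemeasurable hθ.aemeasurable hfm huv
    _ = ((∫ x, f x ∂P : ℝ) : ℂ) • ⟪u, v⟫_ℂ := by
        rw [integral_complex_ofReal, L2.inner_def,
          ← integral_map (f := fun x ↦ ⟪u x, v x⟫_ℂ) hθ.aemeasurable huv, hθ.map_eq]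
    _ = ⟪(((∫ x, f x ∂P : ℝ) : ℂ) • (1 : Lp ℂ 2 P →L[ℂ] Lp ℂ 2 P)) u, v⟫_ℂ := by
        rw [smul_apply, one_apply_eq_self, inner_smul_left,
          Complex.conj_ofReal, smul_eq_mul]

end L2

section Shift

theorem indepFun_reindex_of_notMem_range {Ω ι κ E : Type*} [MeasurableSpace Ω] [MeasurableSpace E]
    {P : Measure Ω} {f : ι → Ω → E} (hf : iIndepFun f P) (hm : ∀ i, Measurable (f i))
    {i : ι} {e : κ → ι} (hi : i ∉ Set.range e) : f i ⟂ᵢ[P] fun ω k ↦ f (e k) ω := by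
  rw [IndepFun_iff_Indep]
  have h := indep_iSup_of_disjoint (fun j ↦ (hm j).comap_le) hf.iIndep
    (S := {i}) (T := Set.range e) (by simpa using hi)
  rw [iSup_singleton, iSup_range] at h
  convert h using 1
  simp only [MeasurableSpace.pi, MeasurableSpace.comap_iSup, MeasurableSpace.comap_comp]
  rfl

/-- The one-sided shift, which deletes the first term of a sequence. -/
def shift {E : Type*} (ω : ℕ → E) : ℕ → E := fun n ↦ ω (n + 1)

variable {E : Type*} [MeasurableSpace E] (ν : Measure E) [IsProbabilityMeasure ν]

theorem measurePreserving_shift :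
    MeasurePreserving shift (Measure.infinitePi fun _ : ℕ ↦ ν)
      (Measure.infinitePi fun _ : ℕ ↦ ν) where
  measurable := by unfold shift; fun_prop
  map_eq := Measure.map_infinitePi_infinitePi_of_inj (P := fun _ ↦ ν) Nat.succ_injective

theorem indepFun_eval_zero_shift :
    (fun ω : ℕ → E ↦ ω 0) ⟂ᵢ[Measure.infinitePi fun _ : ℕ ↦ ν] shift :=
  indepFun_reindex_of_notMem_range (e := Nat.succ)
    (iIndepFun_infinitePi (P := fun _ ↦ ν) (X := fun _ x ↦ x) fun _ ↦ measurable_id)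
    (fun _ ↦ by fun_prop) (by simp)

end Shift

section FreeMeasure

theorem exists_measure_freeOperator {H : Type*} [NormedAddCommGroup H] [InnerProductSpace ℂ H]
    [CompleteSpace H] {S X : H →L[ℂ] H} {Ω : H} (hS : star S * S = 1) (hX : IsSelfAdjoint X)
    (hSX : star S * (X * S) = 0) (hΩ : S Ω = Ω) (hΩ_norm : ‖Ω‖ = 1) (c : ℝ) :
    ∃ (μ : Measure ℝ) (R : ℝ), IsProbabilityMeasure μ ∧ (∀ᵐ x ∂μ, |x| ≤ R) ∧
      ∫ x, x ∂μ = 0 ∧ ∫ x, x ^ 2 ∂μ = ‖X Ω‖ ^ 2 ∧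
      ∀ (r m : ℝ) (N : H →L[ℂ] H), r ≠ 0 → ‖N‖ < 1 → star S * N = 0 →
        star S * (X * N) = (m : ℂ) • 1 →
        ((r : ℂ) • 1 - (c : ℂ) • X) * N = (X - ((c * m : ℝ) : ℂ) • 1) * S → R < |r + m| →
        ∫ x, (r + m - x)⁻¹ ∂μ = r⁻¹ := by
  obtain ⟨μ, hμ, hR, hmean, hsq, hinv⟩ :=
    exists_spectral_measure (isSelfAdjoint_freeOperator S hX c) hΩ_norm
  have hXΩ : (X * S) Ω = X Ω := congrArg X hΩ
  refine ⟨μ, _, hμ, hR, ?_, ?_, fun r m N hr hN hSN hSXN hrN hRr ↦ ?_⟩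
  · rw [hmean, freeOperator_apply_vacuum hS hSX hΩ, ← hXΩ,
      inner_apply_eq_zero_of_star_mul_eq_zero hSX hΩ, Complex.zero_re]
  · rw [hsq, freeOperator_apply_vacuum hS hSX hΩ]
  · obtain ⟨ψ, hψ⟩ := exists_sub_apply_eq hN ((r : ℂ)⁻¹ • Ω)
    have hres := smul_sub_freeOperator_apply_eq hS hSX hΩ hSN hSXN (mod_cast hrN)
      (Complex.ofReal_ne_zero.mpr hr) hψ
    have hψΩ : ⟪ψ, Ω⟫_ℂ = (r⁻¹ : ℝ) := by
      rw [← sub_add_cancel ψ (N ψ), hψ, inner_add_left, inner_smul_left,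
        inner_apply_eq_zero_of_star_mul_eq_zero hSN hΩ, inner_self_eq_norm_sq_to_K, hΩ_norm]
      simp
    rw [hinv (r + m) ψ hRr (mod_cast hres), hψΩ, Complex.ofReal_re]

theorem norm_mulL2_const_one_sq {α : Type*} [MeasurableSpace α] {P : Measure α} [IsFiniteMeasure P]
    {f : α → ℝ} (hf : MemLp f ∞ P) :
    ‖mulL2 f hf (Lp.const 2 P 1)‖ ^ 2 = ∫ x, f x ^ 2 ∂P := by
  have hinner : ⟪mulL2 f hf (Lp.const 2 P 1), mulL2 f hf (Lp.const 2 P 1)⟫_ℂ =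
      ∫ x, ((f x ^ 2 : ℝ) : ℂ) ∂P := by
    rw [L2.inner_def]
    refine integral_congr_ae ?_
    filter_upwards [coeFn_mulL2 hf (Lp.const 2 P 1), Lp.coeFn_const 2 P (1 : ℂ)] with x hfx hx
    rw [hfx, hx, inner_self_eq_norm_sq_to_K]
    simp [← Complex.ofReal_pow]
  rw [integral_complex_ofReal, inner_self_eq_norm_sq_to_K] at hinner
  exact Complex.ofReal_injective (by simpa using hinner)

/-- The multiplier `x ↦ (x - c * m) / (r - c * x)`, normalised by `∫ g = 0` and `∫ x g = m`. In the
notation of `exists_measure_freeOperator`, multiplication by `g` followed after `S` is the strict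
contraction `N` whose Neumann series inverts `r + m - freeOperator S X c` at the vacuum. -/
structure IsResolventMultiplier (ν : Measure ℝ) (c r m : ℝ) (g : ℝ → ℝ) : Prop where
  measurable : Measurable g
  exists_abs_le : ∃ C < 1, ∀ᵐ x ∂ν, |g x| ≤ C
  ae_sub_mul_eq : ∀ᵐ x ∂ν, (r - c * x) * g x = x - c * m
  integral_eq_zero : ∫ x, g x ∂ν = 0
  integral_mul_eq : ∫ x, x * g x ∂ν = m

variable {ν : Measure ℝ} {R : ℝ}

theorem exists_measure_of_hasLaw_of_indepFun {α : Type*} [MeasurableSpace α] {P : Measure α}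
    [IsProbabilityMeasure P] {θ : α → α} {ξ : α → ℝ} (hθ : MeasurePreserving θ P P)
    (hξ : HasLaw ξ ν P) (hξθ : ξ ⟂ᵢ[P] θ) (hR : ∀ᵐ x ∂ν, |x| ≤ R) (hν : ∫ x, x ∂ν = 0) (c : ℝ) :
    ∃ (μ : Measure ℝ) (R' : ℝ), IsProbabilityMeasure μ ∧ (∀ᵐ x ∂μ, |x| ≤ R') ∧
      ∫ x, x ∂μ = 0 ∧ ∫ x, x ^ 2 ∂μ = ∫ x, x ^ 2 ∂ν ∧
      ∀ (r m : ℝ) (g : ℝ → ℝ), r ≠ 0 → IsResolventMultiplier ν c r m g → R' < |r + m| →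
        ∫ x, (r + m - x)⁻¹ ∂μ = r⁻¹ := by
  have hae {p : ℝ → Prop} (hp : ∀ᵐ x ∂ν, p x) : ∀ᵐ ω ∂P, p (ξ ω) :=
    ae_of_ae_map hξ.aemeasurable (hξ.map_eq.symm ▸ hp)
  have hint {h : ℝ → ℝ} (hh : Measurable h) : ∫ ω, h (ξ ω) ∂P = ∫ x, h x ∂ν :=
    hξ.integral_comp hh.aestronglyMeasurable
  have hξR : MemLp ξ ∞ P :=
    memLp_top_of_bound hξ.aemeasurable.aestronglyMeasurable R (hae hR)
  obtain ⟨μ, R', hμ, hR', hmean, hsq, hinv⟩ := exists_measure_freeOperator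
    (star_koopman_mul_koopman hθ) (isSelfAdjoint_mulL2 hξR)
    (by simp [star_koopman_mul_mulL2_mul_koopman hθ hξR hξθ, hξ.integral_eq, hν])
    (koopman_const hθ 1) (by simp [Lp.norm_const]) c
  refine ⟨μ, R', hμ, hR', hmean, ?_, fun r m g hr hg hR'r ↦ ?_⟩
  · rw [hsq, norm_mulL2_const_one_sq hξR, hint (h := fun x ↦ x ^ 2) (by fun_prop)]
  obtain ⟨C, hC, hgC⟩ := hg.exists_abs_le
  have hgξ : MemLp (g ∘ ξ) ∞ P := memLp_top_of_bound
    (hg.measurable.comp_aemeasurable hξ.aemeasurable).aestronglyMeasurable C (hae hgC)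
  refine hinv r m (mulL2 (g ∘ ξ) hgξ * koopman hθ) hr ?_ ?_ ?_ ?_ hR'r
  · have hC0 : 0 ≤ C := (abs_nonneg _).trans (hae hgC).exists.choose_spec
    calc ‖mulL2 (g ∘ ξ) hgξ * koopman hθ‖ ≤ ‖mulL2 (g ∘ ξ) hgξ‖ * ‖koopman hθ‖ := norm_mul_le _ _
      _ ≤ C * 1 := mul_le_mul (norm_mulL2_le hC0 hgξ (hae hgC)) (norm_koopman_le_one hθ)
          (norm_nonneg _) hC0
      _ < 1 := by rwa [mul_one]
  · rw [star_koopman_mul_mulL2_mul_koopman hθ hgξ (hξθ.comp hg.measurable measurable_id)]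
    simp [hint hg.measurable, hg.integral_eq_zero]
  · have hξg : Measurable fun x ↦ x * g x := measurable_id.mul hg.measurable
    have hξgθ : (ξ * g ∘ ξ) ⟂ᵢ[P] θ := hξθ.comp hξg measurable_id
    rw [← mul_assoc (mulL2 ξ hξR), mulL2_mul_mulL2,
      star_koopman_mul_mulL2_mul_koopman hθ (hgξ.mul hξR) hξgθ]
    simp [hint hξg, hg.integral_mul_eq]
  · rw [← mul_assoc, smul_one_sub_smul_mulL2_mul_mulL2 hξR hgξ (hae hg.ae_sub_mul_eq)]

theorem exists_measure_integral_inv_eq_inv [IsProbabilityMeasure ν] (hR : ∀ᵐ x ∂ν, |x| ≤ R)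
    (hν : ∫ x, x ∂ν = 0) (c : ℝ) :
    ∃ (μ : Measure ℝ) (R' : ℝ), IsProbabilityMeasure μ ∧ (∀ᵐ x ∂μ, |x| ≤ R') ∧
      ∫ x, x ∂μ = 0 ∧ ∫ x, x ^ 2 ∂μ = ∫ x, x ^ 2 ∂ν ∧
      ∀ (r m : ℝ) (g : ℝ → ℝ), r ≠ 0 → IsResolventMultiplier ν c r m g → R' < |r + m| →
        ∫ x, (r + m - x)⁻¹ ∂μ = r⁻¹ :=
  exists_measure_of_hasLaw_of_indepFun (measurePreserving_shift ν)
    (measurePreserving_eval_infinitePi (fun _ ↦ ν) 0).hasLaw (indepFun_eval_zero_shift ν) hR hν c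

end FreeMeasure

section CSKKernel

variable {ν : Measure ℝ} {V h : ℝ → ℝ} {m R x : ℝ}

theorem ae_abs_le_iff_measure_compl_Icc_eq_zero : (∀ᵐ x ∂ν, |x| ≤ R) ↔ ν (Set.Icc (-R) R)ᶜ = 0 := by
  simp_rw [abs_le]
  rfl

theorem measurable_cskKernel (V : ℝ → ℝ) (m : ℝ) : Measurable (cskKernel V m) := by
  unfold cskKernel
  fun_prop

theorem cskKernel_zero_left (hV : V 0 ≠ 0) (x : ℝ) : cskKernel V 0 x = 1 := by
  simp [cskKernel, hV]

theorem cskKernel_eq_mul_inv (hm : m ≠ 0) (x : ℝ) :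
    cskKernel V m x = V m / m * (V m / m + m - x)⁻¹ := by
  have hden : V m / m + m - x = (V m + m * (m - x)) / m := by field_simp; ring
  rw [cskKernel, hden, inv_div, div_mul_div_cancel₀ hm]

theorem mul_mul_cskKernel (hden : V m + m * (m - x) ≠ 0) :
    m * (x * cskKernel V m x) = (V m + m ^ 2) * cskKernel V m x - V m := by
  unfold cskKernel
  field_simp
  ring

theorem pos_of_abs_mul_lt {v : ℝ} (hR : 0 ≤ R) (hm : |m| * (|m| + R) < v / 2) : 0 < v := by
  have : 0 ≤ |m| * (|m| + R) := by positivity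
  linarith

theorem half_lt_add_mul_sub {v : ℝ} (hx : |x| ≤ R) (hm : |m| * (|m| + R) < v / 2) :
    v / 2 < v + m * (m - x) := by
  have habs : |m * (m - x)| ≤ |m| * (|m| + R) := by
    rw [abs_mul]
    gcongr
    exact (abs_sub m x).trans (by gcongr)
  linarith [neg_abs_le (m * (m - x))]

theorem lt_abs_div_add {v : ℝ} (hm0 : m ≠ 0) (hR : 0 ≤ R) (hm : |m| * (|m| + R) < v / 2) :
    R < |v / m + m| := by
  have hv := pos_of_abs_mul_lt hR hm
  have hvm : v / m + m = (v + m ^ 2) / m := by field_simp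
  rw [hvm, abs_div, lt_div_iff₀ (abs_pos.mpr hm0), abs_of_pos (by positivity : 0 < v + m ^ 2)]
  nlinarith [sq_abs m, sq_nonneg m]

theorem cskKernel_mem_Icc (hx : |x| ≤ R) (hm : |m| * (|m| + R) < V m / 2) :
    cskKernel V m x ∈ Set.Icc 0 2 := by
  have hv := pos_of_abs_mul_lt ((abs_nonneg x).trans hx) hm
  have hden := half_lt_add_mul_sub hx hm
  have hden_pos : 0 < V m + m * (m - x) := by linarith
  exact ⟨div_nonneg hv.le hden_pos.le, (div_le_iff₀ hden_pos).mpr (by linarith)⟩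

theorem eventually_abs_mul_lt (hV : ContinuousAt V 0) (hV0 : 0 < V 0) (R : ℝ) :
    ∀ᶠ m in 𝓝 0, |m| * (|m| + R) < V m / 2 := by
  have hcont : ContinuousAt (fun m ↦ |m| * (|m| + R)) 0 := by fun_prop
  exact hcont.eventually_lt (hV.div_const 2) (by simpa using hV0)

theorem integrable_mul_cskKernel (hR : ∀ᵐ x ∂ν, |x| ≤ R) (hm : |m| * (|m| + R) < V m / 2)
    (hh : Integrable h ν) : Integrable (fun x ↦ h x * cskKernel V m x) ν := by
  refine hh.mul_bdd (c := 2) (measurable_cskKernel V m).aestronglyMeasurable ?_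
  filter_upwards [hR] with x hx
  obtain ⟨hk0, hk2⟩ := cskKernel_mem_Icc hx hm
  rwa [Real.norm_of_nonneg hk0]

theorem mul_integral_mul_cskKernel (hR : ∀ᵐ x ∂ν, |x| ≤ R) (hm : |m| * (|m| + R) < V m / 2)
    (hh : Integrable h ν) :
    m * ∫ x, x * (h x * cskKernel V m x) ∂ν =
      (V m + m ^ 2) * ∫ x, h x * cskKernel V m x ∂ν - V m * ∫ x, h x ∂ν := by
  rw [← integral_const_mul, ← integral_const_mul, ← integral_const_mul,
    ← integral_sub ((integrable_mul_cskKernel hR hm hh).const_mul _) (hh.const_mul _)]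
  refine integral_congr_ae ?_
  filter_upwards [hR] with x hx
  have hv := pos_of_abs_mul_lt ((abs_nonneg x).trans hx) hm
  have hden : V m + m * (m - x) ≠ 0 := by linarith [half_lt_add_mul_sub hx hm]
  linear_combination h x * mul_mul_cskKernel hden

theorem integrable_id_of_ae_abs_le [IsFiniteMeasure ν] (hR : ∀ᵐ x ∂ν, |x| ≤ R) :
    Integrable (fun x ↦ x) ν :=
  .of_bound aestronglyMeasurable_id R hR

theorem integral_id_mul_cskKernel [IsProbabilityMeasure ν] (hR : ∀ᵐ x ∂ν, |x| ≤ R)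
    (hm : |m| * (|m| + R) < V m / 2) (hm0 : m ≠ 0) (hmass : ∫ x, cskKernel V m x ∂ν = 1) :
    ∫ x, x * cskKernel V m x ∂ν = m := by
  have hrec := mul_integral_mul_cskKernel hR hm (integrable_const 1)
  simp only [one_mul, hmass, integral_const, probReal_univ, one_smul] at hrec
  exact mul_left_cancel₀ hm0 (by linear_combination hrec)

theorem integral_id_mul_id_mul_cskKernel [IsFiniteMeasure ν] (hR : ∀ᵐ x ∂ν, |x| ≤ R)
    (hν : ∫ x, x ∂ν = 0) (hm : |m| * (|m| + R) < V m / 2) (hm0 : m ≠ 0)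
    (hmean : ∫ x, x * cskKernel V m x ∂ν = m) :
    ∫ x, x * (x * cskKernel V m x) ∂ν = V m + m ^ 2 := by
  have hrec := mul_integral_mul_cskKernel hR hm (integrable_id_of_ae_abs_le hR)
  rw [hmean, hν] at hrec
  exact mul_left_cancel₀ hm0 (by linear_combination hrec)

theorem tendsto_integral_mul_cskKernel (hR : ∀ᵐ x ∂ν, |x| ≤ R) (hV : ContinuousAt V 0)
    (hV0 : 0 < V 0) (hh : Integrable h ν) :
    Tendsto (fun m ↦ ∫ x, h x * cskKernel V m x ∂ν) (𝓝 0) (𝓝 (∫ x, h x ∂ν)) := by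
  refine tendsto_integral_filter_of_dominated_convergence (fun x ↦ ‖h x‖ * 2) ?_ ?_
    (hh.norm.mul_const 2) (.of_forall fun x ↦ ?_)
  · exact .of_forall fun m ↦ hh.1.mul (measurable_cskKernel V m).aestronglyMeasurable
  · filter_upwards [eventually_abs_mul_lt hV hV0 R] with m hm
    filter_upwards [hR] with x hx
    obtain ⟨hk0, hk2⟩ := cskKernel_mem_Icc hx hm
    rw [norm_mul, Real.norm_of_nonneg hk0]
    gcongr
  · have hk : ContinuousAt (fun m ↦ h x * cskKernel V m x) 0 :=
      continuousAt_const.mul (hV.div (by fun_prop) (by simpa using hV0.ne'))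
    simpa [cskKernel_zero_left hV0.ne'] using hk.tendsto

theorem isCSKVarianceFun_of_eventually_integral_eq_one [IsProbabilityMeasure ν]
    (hR : ∀ᵐ x ∂ν, |x| ≤ R) (hν : ∫ x, x ∂ν = 0) (hV : AnalyticAt ℝ V 0) (hV0 : 0 < V 0)
    (hmass : ∀ᶠ m in 𝓝[≠] 0, ∫ x, cskKernel V m x ∂ν = 1) : IsCSKVarianceFun ν V := by
  have hmass' := eventually_nhdsWithin_iff.mp hmass
  obtain ⟨ε, hε, hball⟩ := Metric.eventually_nhds_iff.mp
    (hmass'.and (eventually_abs_mul_lt hV.continuousAt hV0 R))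
  refine ⟨hV, hV0, ε, hε, fun m hmε ↦ ?_⟩
  obtain ⟨hm1, hm⟩ := hball (y := m) (by simpa using hmε)
  refine ⟨hR.mono fun x hx ↦ (cskKernel_mem_Icc hx hm).1, ?_⟩
  rcases eq_or_ne m 0 with rfl | hm0
  · simp [cskKernel_zero_left hV0.ne', hν]
  · exact ⟨hm1 hm0, integral_id_mul_cskKernel hR hm hm0 (hm1 hm0)⟩

theorem IsCSKVarianceFun.eventually_integral_eq (hV : IsCSKVarianceFun ν V) :
    ∀ᶠ m in 𝓝 0, ∫ x, cskKernel V m x ∂ν = 1 ∧ ∫ x, x * cskKernel V m x ∂ν = m := by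
  obtain ⟨-, -, ε, hε, hk⟩ := hV
  exact Metric.eventually_nhds_iff.mpr ⟨ε, hε, fun m hm ↦ (hk m (by simpa using hm)).2⟩

theorem IsCSKVarianceFun.eventually_nhdsNE_integral_sq [IsFiniteMeasure ν]
    (hV : IsCSKVarianceFun ν V) (hR : ∀ᵐ x ∂ν, |x| ≤ R) (hν : ∫ x, x ∂ν = 0) :
    ∀ᶠ m in 𝓝[≠] 0, ∫ x, x * (x * cskKernel V m x) ∂ν = V m + m ^ 2 := by
  filter_upwards [nhdsWithin_le_nhds hV.eventually_integral_eq, nhdsWithin_le_nhds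
    (eventually_abs_mul_lt hV.1.continuousAt hV.2.1 R), self_mem_nhdsWithin] with m hk hm hm0
  exact integral_id_mul_id_mul_cskKernel hR hν hm hm0 hk.2

theorem IsCSKVarianceFun.apply_zero [IsFiniteMeasure ν] (hV : IsCSKVarianceFun ν V)
    (hR : ∀ᵐ x ∂ν, |x| ≤ R) (hν : ∫ x, x ∂ν = 0) : V 0 = ∫ x, x ^ 2 ∂ν := by
  have hsq : Integrable (fun x ↦ x * x) ν :=
    (integrable_id_of_ae_abs_le hR).mul_bdd aestronglyMeasurable_id hR
  have hVlim : Tendsto (fun m ↦ V m + m ^ 2) (𝓝 0) (𝓝 (V 0)) := by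
    simpa using hV.1.continuousAt.tendsto.add (continuousAt_id.tendsto.pow 2)
  have hk := tendsto_integral_mul_cskKernel hR hV.1.continuousAt hV.2.1 hsq
  simp_rw [mul_assoc, ← sq] at hk
  exact tendsto_nhds_unique (hVlim.mono_left nhdsWithin_le_nhds)
    ((hk.mono_left nhdsWithin_le_nhds).congr' (hV.eventually_nhdsNE_integral_sq hR hν))

theorem IsCSKVarianceFun.eventually_integral_sq [IsFiniteMeasure ν] (hV : IsCSKVarianceFun ν V)
    (hR : ∀ᵐ x ∂ν, |x| ≤ R) (hν : ∫ x, x ∂ν = 0) :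
    ∀ᶠ m in 𝓝 0, ∫ x, x * (x * cskKernel V m x) ∂ν = V m + m ^ 2 := by
  have hne := eventually_nhdsWithin_iff.mp (hV.eventually_nhdsNE_integral_sq hR hν)
  filter_upwards [hne] with m hm
  rcases eq_or_ne m 0 with rfl | hm0
  · simp [cskKernel_zero_left hV.2.1.ne', hV.apply_zero hR hν, ← sq]
  · exact hm hm0

end CSKKernel

section AddSq

variable {ν : Measure ℝ} {V : ℝ → ℝ} {R : ℝ}

theorem sub_mul_div_mul_cskKernel {c m M x : ℝ} (hm0 : m ≠ 0) (hM : c * m = M) (hV : V M ≠ 0)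
    (hden : V M + M * (M - x) ≠ 0) :
    ((V M + M ^ 2) / m - c * x) * (m / V M * ((x - M) * cskKernel V M x)) = x - M := by
  subst hM
  unfold cskKernel
  field_simp
  ring

theorem integral_sub_mul_cskKernel {M : ℝ} [IsFiniteMeasure ν] (hR : ∀ᵐ x ∂ν, |x| ≤ R)
    (hM : |M| * (|M| + R) < V M / 2) (hmass : ∫ x, cskKernel V M x ∂ν = 1)
    (hmean : ∫ x, x * cskKernel V M x ∂ν = M) : ∫ x, (x - M) * cskKernel V M x ∂ν = 0 := by
  simp_rw [sub_mul]
  rw [integral_sub (integrable_mul_cskKernel hR hM (integrable_id_of_ae_abs_le hR))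
    (integrable_mul_cskKernel hR hM (integrable_const M)), integral_const_mul, hmean, hmass]
  ring

theorem integral_mul_sub_mul_cskKernel {M : ℝ} [IsFiniteMeasure ν] (hR : ∀ᵐ x ∂ν, |x| ≤ R)
    (hM : |M| * (|M| + R) < V M / 2) (hmean : ∫ x, x * cskKernel V M x ∂ν = M)
    (hsq : ∫ x, x * (x * cskKernel V M x) ∂ν = V M + M ^ 2) :
    ∫ x, x * ((x - M) * cskKernel V M x) ∂ν = V M := by
  have hid : Integrable (fun x ↦ x) ν := integrable_id_of_ae_abs_le hR
  have hid_sq : Integrable (fun x ↦ x * x) ν := hid.mul_bdd aestronglyMeasurable_id hR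
  have hsplit (x : ℝ) : x * ((x - M) * cskKernel V M x) =
      x * x * cskKernel V M x - M * (x * cskKernel V M x) := by ring
  simp_rw [← mul_assoc] at hsq
  simp_rw [hsplit]
  rw [integral_sub (integrable_mul_cskKernel hR hM hid_sq)
    ((integrable_mul_cskKernel hR hM hid).const_mul M), integral_const_mul, hmean, hsq]
  ring

theorem abs_mul_sub_mul_cskKernel_le {M x : ℝ} (hx : |x| ≤ R)
    (hM : |M| * (|M| + R) < V M / 2) (a : ℝ) :
    |a * ((x - M) * cskKernel V M x)| ≤ |a| * ((|M| + R) * 2) := by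
  obtain ⟨hk0, hk2⟩ := cskKernel_mem_Icc hx hM
  have hxM : |x - M| ≤ |M| + R := (abs_sub x M).trans (by linarith)
  rw [abs_mul, abs_mul, abs_of_nonneg hk0]
  gcongr
  exact (abs_nonneg _).trans hxM

theorem isResolventMultiplier_cskKernel [IsProbabilityMeasure ν] {c m M : ℝ}
    (hR : ∀ᵐ x ∂ν, |x| ≤ R) (hM : |M| * (|M| + R) < V M / 2) (hm0 : m ≠ 0) (hcm : c * m = M)
    (hC : |m / V M| * ((|M| + R) * 2) < 1) (hmass : ∫ x, cskKernel V M x ∂ν = 1)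
    (hmean : ∫ x, x * cskKernel V M x ∂ν = M)
    (hsq : ∫ x, x * (x * cskKernel V M x) ∂ν = V M + M ^ 2) :
    IsResolventMultiplier ν c ((V M + M ^ 2) / m) m
      (fun x ↦ m / V M * ((x - M) * cskKernel V M x)) := by
  have hVM : 0 < V M := pos_of_abs_mul_lt ((abs_nonneg _).trans hR.exists.choose_spec) hM
  refine ⟨?_, ⟨_, hC, hR.mono fun x hx ↦ abs_mul_sub_mul_cskKernel_le hx hM _⟩, ?_, ?_, ?_⟩
  · exact measurable_const.mul ((by fun_prop : Measurable (· - M)).mul (measurable_cskKernel V M))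
  · filter_upwards [hR] with x hx
    have hden : V M + M * (M - x) ≠ 0 := by linarith [half_lt_add_mul_sub hx hM]
    rw [sub_mul_div_mul_cskKernel hm0 hcm hVM.ne' hden, hcm]
  · rw [integral_const_mul, integral_sub_mul_cskKernel hR hM hmass hmean, mul_zero]
  · simp_rw [mul_left_comm _ (m / V M)]
    rw [integral_const_mul, integral_mul_sub_mul_cskKernel hR hM hmean hsq,
      div_mul_cancel₀ _ hVM.ne']

theorem IsCSKVarianceFun.eventually_exists_isResolventMultiplier [IsProbabilityMeasure ν]
    (hV : IsCSKVarianceFun ν V) (hR : ∀ᵐ x ∂ν, |x| ≤ R) (hν : ∫ x, x ∂ν = 0) (c : ℝ) :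
    ∀ᶠ m in 𝓝[≠] 0, ∃ g, IsResolventMultiplier ν c ((V (c * m) + (c * m) ^ 2) / m) m g := by
  have hVcont : ContinuousAt V 0 := hV.1.continuousAt
  have hcm : Tendsto (fun m ↦ c * m) (𝓝 0) (𝓝 0) :=
    (continuous_const_mul c).tendsto' 0 0 (mul_zero c)
  have hbound : ∀ᶠ m in 𝓝 0, |m / V (c * m)| * ((|c * m| + R) * 2) < 1 := by
    have hVcm : ContinuousAt (fun m ↦ V (c * m)) 0 :=
      ContinuousAt.comp' (by simpa using hVcont) (by fun_prop)
    have hcont : ContinuousAt (fun m ↦ |m / V (c * m)| * ((|c * m| + R) * 2)) 0 :=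
      (continuousAt_id.div hVcm (by simpa using hV.2.1.ne')).abs.mul (by fun_prop)
    exact hcont.eventually_lt_const (by simp)
  refine eventually_nhdsWithin_iff.mpr ?_
  filter_upwards [hcm.eventually hV.eventually_integral_eq,
    hcm.eventually (hV.eventually_integral_sq hR hν),
    hcm.eventually (eventually_abs_mul_lt hVcont hV.2.1 R), hbound]
    with m ⟨hmass, hmean⟩ hsq hM hC hm0
  exact ⟨_, isResolventMultiplier_cskKernel hR hM hm0 rfl hC hmass hmean hsq⟩

theorem exists_isCSKVarianceFun_comp_mul_add_sq [IsProbabilityMeasure ν]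
    (hR : ∀ᵐ x ∂ν, |x| ≤ R) (hν : ∫ x, x ∂ν = 0) (hV : IsCSKVarianceFun ν V) (c : ℝ) :
    ∃ (μ : Measure ℝ) (R' : ℝ), IsProbabilityMeasure μ ∧ (∀ᵐ x ∂μ, |x| ≤ R') ∧
      ∫ x, x ∂μ = 0 ∧ ∫ x, x ^ 2 ∂μ = ∫ x, x ^ 2 ∂ν ∧
      IsCSKVarianceFun μ (fun m ↦ V (c * m) + (c * m) ^ 2) := by
  obtain ⟨μ, R', hμ, hR', hmean, hsq, hinv⟩ := exists_measure_integral_inv_eq_inv hR hν c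
  set W : ℝ → ℝ := fun m ↦ V (c * m) + (c * m) ^ 2 with hWdef
  have hVc : AnalyticAt ℝ (fun m ↦ V (c * m)) 0 :=
    AnalyticAt.fun_comp (by simpa using hV.1) (by fun_prop)
  have hW : AnalyticAt ℝ W 0 := hVc.fun_add (by fun_prop)
  have hW0 : 0 < W 0 := by simpa [hWdef] using hV.2.1
  refine ⟨μ, R', hμ, hR', hmean, hsq,
    isCSKVarianceFun_of_eventually_integral_eq_one hR' hmean hW hW0 ?_⟩
  filter_upwards [hV.eventually_exists_isResolventMultiplier hR hν c,
    nhdsWithin_le_nhds (eventually_abs_mul_lt hW.continuousAt hW0 R'), self_mem_nhdsWithin]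
    with m ⟨g, hg⟩ hm hm0
  have hR'0 : 0 ≤ R' := (abs_nonneg _).trans hR'.exists.choose_spec
  have hr : W m / m ≠ 0 := div_ne_zero (pos_of_abs_mul_lt hR'0 hm).ne' hm0
  calc ∫ x, cskKernel W m x ∂μ = W m / m * ∫ x, (W m / m + m - x)⁻¹ ∂μ := by
        simp_rw [cskKernel_eq_mul_inv hm0, integral_const_mul]
    _ = 1 := by rw [hinv _ m g hr hg (lt_abs_div_add hm0 hR'0 hm), mul_inv_cancel₀ hr]

theorem memVinf_add_sq_general (hν : IsCSKGenerator ν) (hV : IsCSKVarianceFun ν V) (c : ℝ) :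
    ∃ μ : Measure ℝ, IsCSKGenerator μ ∧ ∫ x, x ^ 2 ∂μ = ∫ x, x ^ 2 ∂ν ∧
      IsCSKVarianceFun μ (fun m ↦ V (c * m) + (c * m) ^ 2) := by
  obtain ⟨hν_prob, ⟨R, hR⟩, -, hν_mean⟩ := hν
  rw [← ae_abs_le_iff_measure_compl_Icc_eq_zero] at hR
  obtain ⟨μ, R', hμ, hR', hmean, hsq, hW⟩ :=
    exists_isCSKVarianceFun_comp_mul_add_sq hR hν_mean hV c
  refine ⟨μ, ⟨hμ, ⟨R', ae_abs_le_iff_measure_compl_Icc_eq_zero.mp hR'⟩, ?_, hmean⟩, hsq, hW⟩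
  rintro a rfl
  have hsq_pos : 0 < ∫ x, x ^ 2 ∂ν := hV.apply_zero hR hν_mean ▸ hV.2.1
  rw [integral_dirac] at hmean hsq
  simp [← hsq, hmean] at hsq_pos

end AddSq

/-- If `V ∈ 𝒱` then `m ↦ V(m) + m² ∈ 𝒱∞`. -/
theorem memVinf_add_sq (V : ℝ → ℝ) (hV : memV V) :
    memVinf (fun m => V m + m ^ 2) := by
  obtain ⟨ν, hν, hν_sq, hνV⟩ := hV
  exact fun c ↦ (memVinf_add_sq_general hν hνV c).imp
    fun _ ⟨hμ, hμ_sq, hμW⟩ ↦ ⟨hμ, hμ_sq.trans hν_sq, hμW⟩
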